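/- arXiv:2501.12376 — 3 statements merged into one kernel-verified Lean document; each statement's English description precedes it below -/
import Mathlib

section
/- For a GU ensemble (1/n, ρ_g = g ρ g†)_{g∈G} generated by an irreducible representation of a finite group G of order n on a d-dimensional space, the optimal value of the state exclusion problem (minimum average probability of failing to exclude) equals (d/n)·λ_min(ρ); in particular this value is positive if and only if ρ has full rank. -/
/-!
Lower bound: `ρ ≥ λ_min(ρ) • 1`, hence also every conjugate of `ρ` by a unitary, so each term
`tr (M g ρ_g)` is at least `λ_min(ρ) tr (M g)`; the traces `tr (M g)` add up to `d`
(`iInf_eigenvalues_mul_trace_le`). This needs no group structure.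

Attainment: take a unit eigenvector `v` of `ρ` for `λ_min(ρ)` and the covariant measurement
`M g = (d/n) • π g (v v†) (π g)†`. The sum over `g` commutes with the representation, so by
irreducibility it is a scalar, and comparing traces shows that it is the identity
(`sum_conj_eq_smul_one`). Each term contributes exactly `(d/n) λ_min(ρ)`.

The value is therefore positive iff all eigenvalues of the positive semidefinite `ρ` are nonzero.
-/


open scoped ComplexOrder

/-- Optimal value of the state exclusion problem for the ensemble `(p i, ρ i)`:
the minimum average probability of failing to exclude. -/
noncomputable def optExcl {ι H : Type*} [Fintype ι] [Fintype H] [DecidableEq H]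
    (p : ι → ℝ) (ρ : ι → Matrix H H ℂ) : ℝ :=
  sInf {x : ℝ | ∃ M : ι → Matrix H H ℂ,
    (∀ i, (M i).PosSemidef) ∧ (∑ i, M i) = 1 ∧ x = ∑ i, p i * ((M i * ρ i).trace).re}

open Matrix

/-- The trace form of `λ_min(A) • 1 ≤ A`: in an eigenbasis of `A` the right-hand side is the sum of
the eigenvalues of `A` weighted by the nonnegative diagonal entries of `N`. -/
lemma iInf_eigenvalues_mul_trace_le {d : ℕ} {N A : Matrix (Fin d) (Fin d) ℂ}
    (hN : N.PosSemidef) (hA : A.IsHermitian) :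
    (⨅ i, hA.eigenvalues i) * N.trace.re ≤ (N * A).trace.re := by
  set V : Matrix (Fin d) (Fin d) ℂ := (hA.eigenvectorUnitary : Matrix (Fin d) (Fin d) ℂ) with hV
  have hVV : V * star V = 1 := Unitary.coe_mul_star_self hA.eigenvectorUnitary
  set D : Matrix (Fin d) (Fin d) ℂ := diagonal (RCLike.ofReal ∘ hA.eigenvalues) with hD
  have hspec : A = V * D * star V := by
    conv_lhs => rw [hA.spectral_theorem, Unitary.conjStarAlgAut_apply]
  have hP : (star V * N * V).PosSemidef := by
    simpa [star_eq_conjTranspose] using hN.conjTranspose_mul_mul_same V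
  have h1 : N.trace = (star V * N * V).trace := by
    rw [Matrix.trace_mul_comm, ← mul_assoc, hVV, one_mul]
  have h2 : (N * A).trace = (star V * N * V * D).trace := by
    conv_lhs => rw [hspec, ← mul_assoc, Matrix.trace_mul_comm]
    simp only [mul_assoc]
  rw [h1, h2]
  generalize star V * N * V = P at hP
  simp only [Matrix.trace, diag_apply, hD, mul_diagonal, Complex.re_sum, Finset.mul_sum]
  refine Finset.sum_le_sum fun i _ => ?_
  have h0 : 0 ≤ (P i i).re := (Complex.le_def.1 (hP.diag_nonneg (i := i))).1
  have h3 : (⨅ i, hA.eigenvalues i) ≤ hA.eigenvalues i := ciInf_le (Set.finite_range _).bddBelow i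
  simpa [mul_comm] using mul_le_mul_of_nonneg_right h3 h0

/-- Schur averaging: the sum over the orbit of `A` under an irreducible representation is a scalar
matrix, and the scalar is determined by the trace. -/
lemma sum_conj_eq_smul_one {G : Type*} [Group G] [Fintype G] {d : ℕ} (hd : 0 < d)
    (π : G →* Matrix.unitaryGroup (Fin d) ℂ)
    (hirr : ∀ Y : Matrix (Fin d) (Fin d) ℂ,
      (∀ g : G, (π g : Matrix (Fin d) (Fin d) ℂ) * Y = Y * (π g : Matrix (Fin d) (Fin d) ℂ)) →
      ∃ c : ℂ, Y = c • (1 : Matrix (Fin d) (Fin d) ℂ))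
    (A : Matrix (Fin d) (Fin d) ℂ) :
    ∑ g, (π g : Matrix (Fin d) (Fin d) ℂ) * A * star (π g : Matrix (Fin d) (Fin d) ℂ)
      = ((Fintype.card G : ℂ) * A.trace / d) • (1 : Matrix (Fin d) (Fin d) ℂ) := by
  obtain ⟨c, hc⟩ := hirr
    (∑ g, (π g : Matrix (Fin d) (Fin d) ℂ) * A * star (π g : Matrix (Fin d) (Fin d) ℂ)) (by
      intro h
      rw [Finset.mul_sum, Finset.sum_mul, ← Equiv.sum_comp (Equiv.mulLeft h)
        (fun g => (π g : Matrix (Fin d) (Fin d) ℂ) * A * star (π g : Matrix (Fin d) (Fin d) ℂ) *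
          (π h : Matrix (Fin d) (Fin d) ℂ))]
      refine Finset.sum_congr rfl fun g _ => ?_
      have hh : star (π h : Matrix (Fin d) (Fin d) ℂ) * (π h : Matrix (Fin d) (Fin d) ℂ) = 1 :=
        Unitary.coe_star_mul_self (π h)
      simp only [Equiv.coe_mulLeft, map_mul, Submonoid.coe_mul, star_mul, mul_assoc, hh, mul_one])
  rw [hc]
  congr 1
  have htr := congrArg Matrix.trace hc
  have h1 : ∀ g, ((π g : Matrix (Fin d) (Fin d) ℂ) * A *
      star (π g : Matrix (Fin d) (Fin d) ℂ)).trace = A.trace := fun g => by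
    have hh : star (π g : Matrix (Fin d) (Fin d) ℂ) * (π g : Matrix (Fin d) (Fin d) ℂ) = 1 :=
      Unitary.coe_star_mul_self (π g)
    rw [Matrix.trace_mul_comm, ← mul_assoc, hh, one_mul]
  have hd' : (d : ℂ) ≠ 0 := by exact_mod_cast hd.ne'
  simp only [Matrix.trace_sum, h1, trace_smul, trace_one, Finset.sum_const, Finset.card_univ,
    nsmul_eq_mul, Fintype.card_fin, smul_eq_mul] at htr
  rw [htr, mul_div_assoc, div_self hd', mul_one]

/-- For a GU ensemble generated by an irreducible representation of `G` (|G| = n) on `ℂ^d`,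
the optimal state-exclusion value is `(d/n) λ_min(ρ)`; it is positive iff `ρ` has full rank. -/
theorem optExcl_GU_irreducible
    {G : Type*} [Group G] [Fintype G] (d : ℕ) (hd : 0 < d)
    (π : G →* Matrix.unitaryGroup (Fin d) ℂ)
    (hirr : ∀ Y : Matrix (Fin d) (Fin d) ℂ,
      (∀ g : G, (π g : Matrix (Fin d) (Fin d) ℂ) * Y = Y * (π g : Matrix (Fin d) (Fin d) ℂ)) →
      ∃ c : ℂ, Y = c • (1 : Matrix (Fin d) (Fin d) ℂ))
    (ρ : Matrix (Fin d) (Fin d) ℂ) (hρ : ρ.PosSemidef) (hρtr : ρ.trace = 1) :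
    optExcl (fun _ : G => 1 / (Fintype.card G : ℝ))
        (fun g => (π g : Matrix (Fin d) (Fin d) ℂ) * ρ * star (π g : Matrix (Fin d) (Fin d) ℂ))
      = ((d : ℝ) / (Fintype.card G : ℝ)) * ⨅ i, hρ.1.eigenvalues i ∧
    (0 < optExcl (fun _ : G => 1 / (Fintype.card G : ℝ))
        (fun g => (π g : Matrix (Fin d) (Fin d) ℂ) * ρ * star (π g : Matrix (Fin d) (Fin d) ℂ))
      ↔ ρ.rank = d) := by
  have hn : (0 : ℝ) < Fintype.card G := by exact_mod_cast Fintype.card_pos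
  have hdR : (0 : ℝ) < d := by exact_mod_cast hd
  have : Nonempty (Fin d) := ⟨⟨0, hd⟩⟩
  have hU : ∀ g, star (π g : Matrix (Fin d) (Fin d) ℂ) * (π g : Matrix (Fin d) (Fin d) ℂ) = 1 :=
    fun g => Unitary.coe_star_mul_self (π g)
  have hU' : ∀ g, (π g : Matrix (Fin d) (Fin d) ℂ) * star (π g : Matrix (Fin d) (Fin d) ℂ) = 1 :=
    fun g => Unitary.coe_mul_star_self (π g)
  have key : optExcl (fun _ : G => 1 / (Fintype.card G : ℝ))
        (fun g => (π g : Matrix (Fin d) (Fin d) ℂ) * ρ * star (π g : Matrix (Fin d) (Fin d) ℂ))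
      = ((d : ℝ) / (Fintype.card G : ℝ)) * ⨅ i, hρ.1.eigenvalues i := by
    refine IsLeast.csInf_eq ⟨?_, ?_⟩
    · obtain ⟨i₀, hi₀⟩ := exists_eq_ciInf_of_finite (f := hρ.1.eigenvalues)
      set v : Fin d → ℂ := ⇑(hρ.1.eigenvectorBasis i₀) with hv
      set P : Matrix (Fin d) (Fin d) ℂ := vecMulVec v (star v) with hP
      have hPpsd : P.PosSemidef := posSemidef_vecMulVec_self_star v
      have hPtr : P.trace = 1 := by
        rw [hP, trace_vecMulVec, hv, ← EuclideanSpace.inner_eq_star_dotProduct,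
          inner_self_eq_norm_sq_to_K, hρ.1.eigenvectorBasis.orthonormal.1 i₀]
        simp
      have hρP : ρ * P = (hρ.1.eigenvalues i₀ : ℂ) • P := by
        rw [hP, mul_vecMulVec, hv, hρ.1.mulVec_eigenvectorBasis, smul_vecMulVec]
        rfl
      have hnC : (Fintype.card G : ℂ) ≠ 0 := by exact_mod_cast hn.ne'
      have hdC : (d : ℂ) ≠ 0 := by exact_mod_cast hdR.ne'
      refine ⟨fun g => (((d : ℝ) / Fintype.card G : ℝ) : ℂ) •
        ((π g : Matrix (Fin d) (Fin d) ℂ) * P * star (π g : Matrix (Fin d) (Fin d) ℂ)),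
        fun g => ?_, ?_, ?_⟩
      · refine PosSemidef.smul ?_ ?_
        · exact hPpsd.mul_mul_conjTranspose_same _
        · exact_mod_cast (div_pos hdR hn).le
      · rw [← Finset.smul_sum, sum_conj_eq_smul_one hd π hirr, hPtr, smul_smul]
        push_cast
        rw [show (d : ℂ) / Fintype.card G * (Fintype.card G * 1 / d) = 1 by field_simp, one_smul]
      · have hterm : ∀ g, (((((d : ℝ) / Fintype.card G : ℝ) : ℂ) •
            ((π g : Matrix (Fin d) (Fin d) ℂ) * P * star (π g : Matrix (Fin d) (Fin d) ℂ))) *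
            ((π g : Matrix (Fin d) (Fin d) ℂ) * ρ * star (π g : Matrix (Fin d) (Fin d) ℂ))).trace
            = (((d : ℝ) / Fintype.card G * hρ.1.eigenvalues i₀ : ℝ) : ℂ) := fun g => by
          have h1 : ((π g : Matrix (Fin d) (Fin d) ℂ) * P *
              star (π g : Matrix (Fin d) (Fin d) ℂ)) *
              ((π g : Matrix (Fin d) (Fin d) ℂ) * ρ * star (π g : Matrix (Fin d) (Fin d) ℂ))
              = (π g : Matrix (Fin d) (Fin d) ℂ) *
                (P * ρ * star (π g : Matrix (Fin d) (Fin d) ℂ)) := by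
            simp only [mul_assoc]
            rw [← mul_assoc (star _) (π g : Matrix (Fin d) (Fin d) ℂ), hU, one_mul]
          rw [smul_mul_assoc, h1, trace_smul, Matrix.trace_mul_comm, mul_assoc, hU, mul_one,
            Matrix.trace_mul_comm, hρP, trace_smul, hPtr]
          simp
        simp only [hterm, Complex.ofReal_re, Finset.sum_const, Finset.card_univ, nsmul_eq_mul]
        rw [← hi₀]
        field_simp
    · rintro x ⟨M, hM, hsum, rfl⟩
      have htr : ∑ g, (M g).trace.re = d := by
        rw [← Complex.re_sum, ← Matrix.trace_sum, hsum]
        simp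
      have hterm : ∀ g, (⨅ i, hρ.1.eigenvalues i) * (M g).trace.re ≤ ((M g) *
          ((π g : Matrix (Fin d) (Fin d) ℂ) * ρ *
            star (π g : Matrix (Fin d) (Fin d) ℂ))).trace.re := fun g => by
        -- Conjugation by `π g` is moved from the state to the measurement operator.
        have h := iInf_eigenvalues_mul_trace_le
          ((hM g).conjTranspose_mul_mul_same (π g : Matrix (Fin d) (Fin d) ℂ)) hρ.1
        rw [← star_eq_conjTranspose] at h
        convert h using 2
        · rw [Matrix.trace_mul_comm, ← mul_assoc, hU', one_mul]
        · rw [← mul_assoc, Matrix.trace_mul_comm]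
          simp only [mul_assoc]
      calc (d : ℝ) / Fintype.card G * ⨅ i, hρ.1.eigenvalues i
          = ∑ g, 1 / (Fintype.card G : ℝ) * ((⨅ i, hρ.1.eigenvalues i) * (M g).trace.re) := by
            rw [← Finset.mul_sum, ← Finset.mul_sum, htr]
            ring
        _ ≤ _ := Finset.sum_le_sum fun g _ =>
            mul_le_mul_of_nonneg_left (hterm g) (by positivity)
  refine ⟨key, ?_⟩
  rw [key, mul_pos_iff_of_pos_left (div_pos hdR hn), hρ.1.rank_eq_card_non_zero_eigs]
  have hcard : Fintype.card {i // hρ.1.eigenvalues i ≠ 0} = d ↔ ∀ i, hρ.1.eigenvalues i ≠ 0 := by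
    rw [Fintype.card_subtype]
    conv_lhs => rhs; rw [← Fintype.card_fin d, ← Finset.card_univ]
    rw [Finset.card_filter_eq_iff]
    simp
  rw [hcard]
  constructor
  · intro h i
    exact (h.trans_le (ciInf_le (Set.finite_range _).bddBelow i)).ne'
  · intro h
    obtain ⟨i₀, hi₀⟩ := exists_eq_ciInf_of_finite (f := hρ.1.eigenvalues)
    rw [← hi₀]
    exact (hρ.eigenvalues_nonneg i₀).lt_of_ne' (h i₀)
end

section
/- Let ρ_n be a U^{⊗n}-invariant state on (C^d)^{⊗n}, so ρ_n = ⊕_{λ⊢_d n} I_{V_λ} ⊗ ρ_λ under Schur–Weyl duality, and consider the GU ensemble (ρ^π = P_π ρ_n P_π†)_{π∈S_n} with uniform priors 1/n!. Then the optimal discrimination success probability equals (1/n!)·Σ_λ d_λ m_{d,λ} λ_max(ρ_λ), where d_λ = dim W_λ and m_{d,λ} = dim V_λ^d. -/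
/-!
Through the unitary `S`, the operators `Sᴴ (⊕_λ I ⊗ f_λ) S` form a `*`-homomorphic image of
the algebra `∏_λ End(W_λ)`; this image contains both the state and all permutation operators.

*Upper bound.* Let `K` be the operator with blocks `f_λ = λ_max(ρ_λ) I`. It commutes with every
`P_π` and dominates `ρ_n`, hence dominates every `P_π ρ_n P_π†`; so for any POVM
`∑_π tr(M_π P_π ρ_n P_π†) ≤ tr K = ∑_λ d_λ m_{d,λ} λ_max(ρ_λ)`.

*Attainment.* Let `E_λ` be the projector on a top eigenvector of `ρ_λ`. By Schur's lemma,
`(d_λ / n!) ∑_π p_λ(π) E_λ p_λ(π)† = I`, so the operators with blocks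
`(d_λ / n!) p_λ(π) E_λ p_λ(π)†` form a POVM, and it attains the bound. Since these operators are
block diagonal, no inequivalence between the different `W_λ` is needed.
-/

open scoped ComplexOrder Kronecker

/-- The `n`-fold tensor (Kronecker) power of a `d × d` matrix, acting on `(ℂ^d)^{⊗n}`. -/
def tpow (d n : ℕ) (U : Matrix (Fin d) (Fin d) ℂ) :
    Matrix (Fin n → Fin d) (Fin n → Fin d) ℂ :=
  Matrix.of fun x y => ∏ k, U (x k) (y k)

/-- The permutation operator `P_π` on `(ℂ^d)^{⊗n}`, permuting the tensor factors. -/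
def permOp (d n : ℕ) (π : Equiv.Perm (Fin n)) :
    Matrix (Fin n → Fin d) (Fin n → Fin d) ℂ :=
  Matrix.of fun x y => if y = x ∘ π then 1 else 0

/-- Optimal success probability of discriminating the ensemble `(p i, ρ i)` by a POVM. -/
noncomputable def optSucc {ι H : Type*} [Fintype ι] [Fintype H] [DecidableEq H]
    (p : ι → ℝ) (ρ : ι → Matrix H H ℂ) : ℝ :=
  sSup {x : ℝ | ∃ M : ι → Matrix H H ℂ,
    (∀ i, (M i).PosSemidef) ∧ (∑ i, M i) = 1 ∧ x = ∑ i, p i * ((M i * ρ i).trace).re}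

open Matrix

/-! ### Permutation operators -/

lemma permOp_mul (d n : ℕ) (π σ : Equiv.Perm (Fin n)) :
    permOp d n π * permOp d n σ = permOp d n (π * σ) := by
  ext x z
  simp only [permOp, Matrix.mul_apply, Matrix.of_apply, mul_ite, mul_one, mul_zero]
  rw [Finset.sum_eq_single (x ∘ π) (fun y _ hy => by simp [hy]) (by simp)]
  simp only [if_true]
  rfl

lemma permOp_one (d n : ℕ) : permOp d n 1 = 1 := by
  ext x y
  simp [permOp, Matrix.one_apply, eq_comm]

lemma permOp_conjTranspose (d n : ℕ) (π : Equiv.Perm (Fin n)) :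
    (permOp d n π)ᴴ = permOp d n π⁻¹ := by
  ext x y
  have : x = y ∘ π ↔ y = x ∘ (π⁻¹ : Equiv.Perm (Fin n)) := by
    constructor <;> rintro rfl <;> ext k <;> simp
  simp [permOp, Matrix.conjTranspose_apply, this, apply_ite (star : ℂ → ℂ)]

/-! ### Positive semidefinite matrices -/

open scoped MatrixOrder in
lemma exists_eq_conjTranspose_mul_self {m : Type*} [Fintype m] [DecidableEq m]
    {A : Matrix m m ℂ} (hA : A.PosSemidef) : ∃ B : Matrix m m ℂ, A = Bᴴ * B := by
  obtain ⟨B, hB⟩ := CStarAlgebra.nonneg_iff_eq_star_mul_self.mp hA.nonneg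
  exact ⟨B, hB⟩

lemma trace_mul_re_nonneg {m : Type*} [Fintype m] [DecidableEq m]
    {A B : Matrix m m ℂ} (hA : A.PosSemidef) (hB : B.PosSemidef) :
    0 ≤ ((A * B).trace).re := by
  obtain ⟨C, rfl⟩ := exists_eq_conjTranspose_mul_self hA
  rw [Matrix.mul_assoc, Matrix.trace_mul_comm]
  exact (Complex.le_def.mp (hB.mul_mul_conjTranspose_same C).trace_nonneg).1

lemma posSemidef_iSup_eigenvalues_sub {m : Type*} [Fintype m] [DecidableEq m]
    {A : Matrix m m ℂ} (hA : A.IsHermitian) :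
    (((⨆ i, hA.eigenvalues i : ℝ) : ℂ) • (1 : Matrix m m ℂ) - A).PosSemidef := by
  set c : ℝ := ⨆ i, hA.eigenvalues i
  set U : Matrix m m ℂ := (hA.eigenvectorUnitary : Matrix m m ℂ)
  have hU : U * Uᴴ = 1 := Unitary.coe_mul_star_self hA.eigenvectorUnitary
  have hspec : A = U * diagonal (RCLike.ofReal ∘ hA.eigenvalues) * Uᴴ := hA.spectral_theorem
  have key : (c : ℂ) • (1 : Matrix m m ℂ) - A
      = U * diagonal (fun i => ((c - hA.eigenvalues i : ℝ) : ℂ)) * Uᴴ := by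
    have hdiag : diagonal (fun i => ((c - hA.eigenvalues i : ℝ) : ℂ))
        = (c : ℂ) • (1 : Matrix m m ℂ) - diagonal (RCLike.ofReal ∘ hA.eigenvalues) := by
      ext i j
      by_cases h : i = j
      · subst h; simp
      · simp [h]
    rw [hdiag, Matrix.mul_sub, Matrix.sub_mul, ← hspec]
    simp [hU]
  rw [key]
  refine PosSemidef.mul_mul_conjTranspose_same (PosSemidef.diagonal fun i => ?_) U
  have : hA.eigenvalues i ≤ c := le_ciSup (Set.finite_range _).bddAbove i
  simpa using this

/-- The witness `E` is the projector on a top eigenvector. On the empty index type it is zero, and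
the supremum takes its junk value `0`. -/
lemma exists_top_projector {m : Type*} [Fintype m] [DecidableEq m]
    {A : Matrix m m ℂ} (hA : A.IsHermitian) :
    ∃ E : Matrix m m ℂ, E.PosSemidef ∧ (Nonempty m → E.trace = 1) ∧
      (E * A).trace = ((⨆ i, hA.eigenvalues i : ℝ) : ℂ) := by
  rcases isEmpty_or_nonempty m with hm | hm
  · exact ⟨0, PosSemidef.zero, fun h => (not_nonempty_iff.mpr hm h).elim, by simp⟩
  obtain ⟨i, hi⟩ := exists_eq_ciSup_of_finite (f := hA.eigenvalues)
  set v : m → ℂ := (hA.eigenvectorBasis i).ofLp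
  have hv : v ⬝ᵥ star v = 1 := by
    have h := hA.eigenvectorBasis.orthonormal.1 i
    have h2 : inner ℂ (hA.eigenvectorBasis i) (hA.eigenvectorBasis i) = (1 : ℂ) := by
      rw [inner_self_eq_norm_sq_to_K, h]; simp
    rwa [EuclideanSpace.inner_eq_star_dotProduct] at h2
  have hAv : A *ᵥ v = hA.eigenvalues i • v := hA.mulVec_eigenvectorBasis i
  refine ⟨vecMulVec v (star v), posSemidef_vecMulVec_self_star v, fun _ => ?_, ?_⟩
  · rw [trace_vecMulVec, hv]
  · rw [Matrix.trace_mul_comm, Matrix.mul_vecMulVec, trace_vecMulVec, hAv, smul_dotProduct, hv,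
      ← hi]
    simp

/-! ### Averaging over an irreducible representation -/

/-- Schur orthogonality in the form of a resolution of identity: the orbit of a trace-one operator
under an irreducible unitary representation averages to `I / d`. -/
lemma schur_average {G : Type*} [Group G] [Fintype G] {d : ℕ}
    (p : G → Matrix (Fin d) (Fin d) ℂ)
    (hmul : ∀ g h, p g * p h = p (g * h)) (hstar : ∀ g, (p g)ᴴ = p g⁻¹) (hone : p 1 = 1)
    (hirr : ∀ Y, (∀ g, p g * Y = Y * p g) → ∃ c : ℂ, Y = c • (1 : Matrix (Fin d) (Fin d) ℂ))
    (E : Matrix (Fin d) (Fin d) ℂ) (hE : Nonempty (Fin d) → E.trace = 1) :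
    ∑ g, ((d : ℂ) / Fintype.card G) • (p g * E * (p g)ᴴ) = 1 := by
  rcases isEmpty_or_nonempty (Fin d) with hd | hd
  · exact Subsingleton.elim _ _
  obtain ⟨c, hc⟩ := hirr (∑ g, p g * E * (p g)ᴴ) (fun h => by
    rw [Finset.mul_sum, Finset.sum_mul]
    refine Fintype.sum_equiv (Equiv.mulLeft h) _ _ fun g => ?_
    simp only [Equiv.coe_mulLeft, hstar, Matrix.mul_assoc, hmul]
    rw [← Matrix.mul_assoc, hmul]
    simp)
  have htr : (Fintype.card G : ℂ) = c * d := by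
    have h := congrArg Matrix.trace hc
    have hcyc : ∀ g, (p g * E * (p g)ᴴ).trace = 1 := fun g => by
      rw [Matrix.trace_mul_comm, ← Matrix.mul_assoc, hstar, hmul]
      simp [hone, hE hd]
    rw [Matrix.trace_sum, Finset.sum_congr rfl fun g _ => hcyc g] at h
    simpa using h
  have hG : (Fintype.card G : ℂ) ≠ 0 := by exact_mod_cast Fintype.card_ne_zero
  rw [← Finset.smul_sum, hc, smul_smul, div_mul_eq_mul_div, mul_comm, ← htr, div_self hG, one_smul]

/-! ### Block operators with identity multiplicity -/

section Block

variable {Lam : Type} [Fintype Lam] [DecidableEq Lam] {mV mW : Lam → ℕ} {H : Type*}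

/-- The operator `Sᴴ (⊕_λ I_{V_λ} ⊗ f_λ) S`, as a linear function of the blocks `f`. -/
noncomputable def blockOp (S : Matrix ((l : Lam) × (Fin (mV l) × Fin (mW l))) H ℂ) :
    ((l : Lam) → Matrix (Fin (mW l)) (Fin (mW l)) ℂ) →ₗ[ℂ] Matrix H H ℂ where
  toFun f := Sᴴ * blockDiagonal'
    (fun l => (1 : Matrix (Fin (mV l)) (Fin (mV l)) ℂ) ⊗ₖ f l) * S
  map_add' f g := by
    have : (fun l => (1 : Matrix (Fin (mV l)) (Fin (mV l)) ℂ) ⊗ₖ (f + g) l)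
      = (fun l => (1 : Matrix (Fin (mV l)) (Fin (mV l)) ℂ) ⊗ₖ f l)
        + fun l => (1 : Matrix (Fin (mV l)) (Fin (mV l)) ℂ) ⊗ₖ g l :=
      funext fun l => kronecker_add _ _ _
    rw [this, blockDiagonal'_add, Matrix.mul_add, Matrix.add_mul]
  map_smul' c f := by
    have : (fun l => (1 : Matrix (Fin (mV l)) (Fin (mV l)) ℂ) ⊗ₖ (c • f) l)
      = c • (fun l => (1 : Matrix (Fin (mV l)) (Fin (mV l)) ℂ) ⊗ₖ f l) :=
      funext fun l => kronecker_smul c _ (f l)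
    rw [this, blockDiagonal'_smul, Matrix.mul_smul, Matrix.smul_mul, RingHom.id_apply]

variable (S : Matrix ((l : Lam) × (Fin (mV l) × Fin (mW l))) H ℂ)
  (f g : (l : Lam) → Matrix (Fin (mW l)) (Fin (mW l)) ℂ)

lemma blockOp_apply : blockOp S f = Sᴴ * blockDiagonal'
    (fun l => (1 : Matrix (Fin (mV l)) (Fin (mV l)) ℂ) ⊗ₖ f l) * S := rfl

lemma blockOp_conj [Fintype H] (hS₁ : S * Sᴴ = 1) : S * blockOp S f * Sᴴ = blockDiagonal'
    (fun l => (1 : Matrix (Fin (mV l)) (Fin (mV l)) ℂ) ⊗ₖ f l) := by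
  rw [blockOp_apply]
  simp only [Matrix.mul_assoc, hS₁, Matrix.mul_one]
  rw [← Matrix.mul_assoc, hS₁, Matrix.one_mul]

lemma blockOp_mul [Fintype H] (hS₁ : S * Sᴴ = 1) : blockOp S f * blockOp S g = blockOp S (f * g) := by
  have : blockDiagonal' (fun l => (1 : Matrix (Fin (mV l)) (Fin (mV l)) ℂ) ⊗ₖ (f * g) l)
      = blockDiagonal' (fun l => (1 : Matrix (Fin (mV l)) (Fin (mV l)) ℂ) ⊗ₖ f l)
        * blockDiagonal' (fun l => (1 : Matrix (Fin (mV l)) (Fin (mV l)) ℂ) ⊗ₖ g l) := by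
    rw [← blockDiagonal'_mul]
    congr 1
    funext l
    rw [← mul_kronecker_mul, Matrix.one_mul, Pi.mul_apply]
  rw [blockOp_apply S (f * g), this, blockOp_apply, blockOp_apply]
  simp only [Matrix.mul_assoc]
  rw [← Matrix.mul_assoc S Sᴴ, hS₁, Matrix.one_mul]

lemma blockOp_one [Fintype H] [DecidableEq H] (hS₂ : Sᴴ * S = 1) : blockOp S 1 = 1 := by
  have : (fun l => (1 : Matrix (Fin (mV l)) (Fin (mV l)) ℂ)
      ⊗ₖ (1 : (l : Lam) → Matrix (Fin (mW l)) (Fin (mW l)) ℂ) l) = 1 :=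
    funext fun l => one_kronecker_one
  rw [blockOp_apply, this, blockDiagonal'_one, Matrix.mul_one, hS₂]

lemma blockOp_conjTranspose : (blockOp S f)ᴴ = blockOp S (fun l => (f l)ᴴ) := by
  simp [blockOp_apply, blockDiagonal'_conjTranspose, conjTranspose_kronecker, Matrix.mul_assoc]

lemma blockOp_trace [Fintype H] (hS₁ : S * Sᴴ = 1) :
    (blockOp S f).trace = ∑ l, (mV l : ℂ) * (f l).trace := by
  rw [blockOp_apply, Matrix.mul_assoc, Matrix.trace_mul_comm, Matrix.mul_assoc, hS₁,
    Matrix.mul_one]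
  have : (blockDiagonal' (fun l => (1 : Matrix (Fin (mV l)) (Fin (mV l)) ℂ) ⊗ₖ f l)).trace
      = ∑ l, ((1 : Matrix (Fin (mV l)) (Fin (mV l)) ℂ) ⊗ₖ f l).trace := by
    simp only [Matrix.trace, Matrix.diag, Fintype.sum_sigma, blockDiagonal'_apply_eq]
  rw [this]
  simp [trace_kronecker]

variable {f g} in
lemma blockOp_posSemidef [Fintype H] (hS₁ : S * Sᴴ = 1) (hf : ∀ l, (f l).PosSemidef) :
    (blockOp S f).PosSemidef := by
  choose b hb using fun l => exists_eq_conjTranspose_mul_self (hf l)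
  have : f = (fun l => (b l)ᴴ) * b := funext hb
  rw [this, ← blockOp_mul S _ _ hS₁, ← blockOp_conjTranspose]
  exact posSemidef_conjTranspose_mul_self _

variable {f g} in
lemma block_eq_of_blockOp_eq [Fintype H] (hS₁ : S * Sᴴ = 1) (h : blockOp S f = blockOp S g) (l : Lam)
    (hl : mV l ≠ 0) : f l = g l := by
  have h2 := blockOp_conj S f hS₁
  rw [h, blockOp_conj S g hS₁] at h2
  have h3 := congrFun (blockDiagonal'_injective h2) l
  ext a b
  have h4 := congrFun (congrFun h3 (⟨0, Nat.pos_of_ne_zero hl⟩, a))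
    (⟨0, Nat.pos_of_ne_zero hl⟩, b)
  simpa [kroneckerMap_apply] using h4.symm

variable {f g} in
/-- Blocks with `m_{d,λ} = 0` do not contribute to `blockOp`. -/
lemma blockOp_congr (h : ∀ l, mV l ≠ 0 → f l = g l) : blockOp S f = blockOp S g := by
  rw [blockOp_apply, blockOp_apply]
  congr 3
  funext l
  by_cases hl : mV l = 0
  · ext ⟨i, _⟩ _
    exact (Fin.cast hl i).elim0
  · rw [h l hl]

end Block

/-! ### The optimal success probability -/

/-- For a `U^{⊗n}`-invariant (Werner-type) generator state
`ρ_n ≅ ⊕_λ I_{V_λ} ⊗ ρ_λ`, the GU ensemble `(P_π ρ_n P_π†)_{π ∈ S_n}` with uniform priors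
has optimal discrimination success probability `(1/n!) ∑_λ d_λ m_{d,λ} λ_max(ρ_λ)`. -/
theorem optSucc_werner_generator
    (d n : ℕ) (hd : 0 < d)
    (ρn : Matrix (Fin n → Fin d) (Fin n → Fin d) ℂ)
    (hρn : ρn.PosSemidef) (hρtr : ρn.trace = 1)
    (hinv : ∀ U : Matrix.unitaryGroup (Fin d) ℂ, tpow d n U * ρn = ρn * tpow d n U)
    -- the Schur–Weyl decomposition data:
    (Lam : Type) [Fintype Lam] [DecidableEq Lam] (mV mW : Lam → ℕ)
    (S : Matrix ((l : Lam) × (Fin (mV l) × Fin (mW l))) (Fin n → Fin d) ℂ)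
    (hS₁ : S * S.conjTranspose = 1) (hS₂ : S.conjTranspose * S = 1)
    -- the irreducible `S_n`-representations on the specht modules `W_λ`:
    (p : (l : Lam) → Equiv.Perm (Fin n) → Matrix (Fin (mW l)) (Fin (mW l)) ℂ)
    (hdecP : ∀ π : Equiv.Perm (Fin n),
      S * permOp d n π * S.conjTranspose
        = Matrix.blockDiagonal'
            (fun l => (1 : Matrix (Fin (mV l)) (Fin (mV l)) ℂ) ⊗ₖ p l π))
    (hirr : ∀ l : Lam, ∀ Y : Matrix (Fin (mW l)) (Fin (mW l)) ℂ,
      (∀ π : Equiv.Perm (Fin n), p l π * Y = Y * p l π) →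
      ∃ c : ℂ, Y = c • (1 : Matrix (Fin (mW l)) (Fin (mW l)) ℂ))
    -- the block decomposition `ρ_n = ⊕_λ I_{V_λ} ⊗ ρ_λ` of the invariant generator:
    (ρl : (l : Lam) → Matrix (Fin (mW l)) (Fin (mW l)) ℂ)
    (hρl : ∀ l, (ρl l).PosSemidef)
    (hρdec : S * ρn * S.conjTranspose
      = Matrix.blockDiagonal'
          (fun l => (1 : Matrix (Fin (mV l)) (Fin (mV l)) ℂ) ⊗ₖ ρl l)) :
    optSucc (fun _ : Equiv.Perm (Fin n) => 1 / (Fintype.card (Equiv.Perm (Fin n)) : ℝ))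
        (fun π => permOp d n π * ρn * star (permOp d n π))
      = (1 / (Fintype.card (Equiv.Perm (Fin n)) : ℝ)) *
          ∑ l : Lam, (mW l : ℝ) * (mV l : ℝ) * ⨆ i, (hρl l).1.eigenvalues i := by
  have hPeq : ∀ π, permOp d n π = blockOp S (fun l => p l π) := fun π => by
    rw [blockOp_apply, ← hdecP π]
    simp only [Matrix.mul_assoc, hS₂, Matrix.mul_one]
    rw [← Matrix.mul_assoc, hS₂, Matrix.one_mul]
  have hρeq : ρn = blockOp S ρl := by
    rw [blockOp_apply, ← hρdec]
    simp only [Matrix.mul_assoc, hS₂, Matrix.mul_one]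
    rw [← Matrix.mul_assoc, hS₂, Matrix.one_mul]
  -- Blocks with `mV l = 0` are invisible to `permOp`, so nothing is known about `p l` there.
  have hone : ∀ l, mV l ≠ 0 → p l 1 = 1 := fun l hl =>
    block_eq_of_blockOp_eq S (f := fun l => p l 1) (g := 1) hS₁
      (by rw [← hPeq, permOp_one, blockOp_one S hS₂]) l hl
  have hmul : ∀ l, mV l ≠ 0 → ∀ π σ, p l π * p l σ = p l (π * σ) := fun l hl π σ =>
    block_eq_of_blockOp_eq S (f := (fun l => p l π) * fun l => p l σ)
      (g := fun l => p l (π * σ)) hS₁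
      (by rw [← blockOp_mul S _ _ hS₁, ← hPeq, ← hPeq, ← hPeq, permOp_mul]) l hl
  have hstar : ∀ l, mV l ≠ 0 → ∀ π, (p l π)ᴴ = p l π⁻¹ := fun l hl π =>
    block_eq_of_blockOp_eq S (f := fun l => (p l π)ᴴ) (g := fun l => p l π⁻¹) hS₁
      (by rw [← blockOp_conjTranspose S (fun l => p l π), ← hPeq, ← hPeq,
        permOp_conjTranspose]) l hl
  have huni : ∀ π, (permOp d n π) * (permOp d n π)ᴴ = 1 := fun π => by
    rw [permOp_conjTranspose, permOp_mul, mul_inv_cancel, permOp_one]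
  set top : Lam → ℝ := fun l => ⨆ i, (hρl l).1.eigenvalues i
  set N : ℕ := Fintype.card (Equiv.Perm (Fin n)) with hN
  refine IsGreatest.csSup_eq ⟨?_, ?_⟩
  -- attainment, by the covariant block-diagonal POVM seeded with the top projectors `E l`
  · choose E hE hEtr hEρ using fun l => exists_top_projector (hρl l).1
    have hE' : ∀ l, (E l * ρl l).trace = (top l : ℂ) := hEρ
    refine ⟨fun π => blockOp S
      (fun l => ((mW l : ℂ) / N) • (p l π * E l * (p l π)ᴴ)), fun π => ?_, ?_, ?_⟩
    · refine blockOp_posSemidef S hS₁ fun l => ?_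
      refine ((hE l).mul_mul_conjTranspose_same (p l π)).smul ?_
      have : (0 : ℝ) ≤ (mW l : ℝ) / N := by positivity
      have h2 := Complex.zero_le_real.mpr this
      push_cast at h2
      exact h2
    · rw [← map_sum, ← blockOp_one S hS₂]
      refine blockOp_congr S fun l hl => ?_
      rw [Finset.sum_apply]
      exact schur_average (p l) (hmul l hl) (hstar l hl) (hone l hl) (hirr l) (E l)
        fun h => hEtr l h
    · have htr : ∀ π, (blockOp S (fun l => ((mW l : ℂ) / N) • (p l π * E l * (p l π)ᴴ))
          * (permOp d n π * ρn * star (permOp d n π))).trace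
          = ((∑ l, (mW l : ℝ) * mV l * top l : ℝ) : ℂ) / N := fun π => by
        rw [star_eq_conjTranspose, hPeq π, hρeq, blockOp_conjTranspose, blockOp_mul S _ _ hS₁,
          blockOp_mul S _ _ hS₁, blockOp_mul S _ _ hS₁, blockOp_trace S _ hS₁]
        push_cast
        rw [Finset.sum_div]
        refine Finset.sum_congr rfl fun l _ => ?_
        by_cases hl : mV l = 0
        · simp [hl]
        have hcancel : (p l π)ᴴ * p l π = 1 := by
          rw [hstar l hl, hmul l hl, inv_mul_cancel, hone l hl]
        have h1 : (p l π * E l * (p l π)ᴴ) * (p l π * ρl l * (p l π)ᴴ)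
            = p l π * (E l * ρl l) * (p l π)ᴴ := by
          calc _ = p l π * E l * ((p l π)ᴴ * p l π) * ρl l * (p l π)ᴴ := by
                simp only [Matrix.mul_assoc]
            _ = _ := by rw [hcancel]; simp only [Matrix.mul_assoc, Matrix.one_mul]
        have h2 : (p l π * (E l * ρl l) * (p l π)ᴴ).trace = top l := by
          rw [Matrix.trace_mul_comm, ← Matrix.mul_assoc, hcancel, Matrix.one_mul, hE']
        simp only [Pi.mul_apply]
        rw [Matrix.smul_mul, h1, Matrix.trace_smul, h2, smul_eq_mul]
        ring
      have hN0 : (N : ℝ) ≠ 0 := by exact_mod_cast Fintype.card_ne_zero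
      simp only [htr]
      rw [Finset.sum_const, Finset.card_univ, ← hN, ← Complex.ofReal_natCast,
        ← Complex.ofReal_div, Complex.ofReal_re, nsmul_eq_mul]
      field_simp
      rfl
  -- upper bound, by the invariant operator `K` dominating every state of the ensemble
  · rintro x ⟨M, hM, hsum, rfl⟩
    set K := blockOp S (fun l => (top l : ℂ) • (1 : Matrix (Fin (mW l)) (Fin (mW l)) ℂ)) with hK
    have hKρ : (K - ρn).PosSemidef := by
      rw [hK, hρeq, ← map_sub]
      exact blockOp_posSemidef S hS₁ fun l => posSemidef_iSup_eigenvalues_sub (hρl l).1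
    have hcomm : ∀ π, permOp d n π * K = K * permOp d n π := fun π => by
      rw [hPeq, hK, blockOp_mul S _ _ hS₁, blockOp_mul S _ _ hS₁]
      congr 1
      funext l
      simp
    have hdom : ∀ π, (K - permOp d n π * ρn * star (permOp d n π)).PosSemidef := fun π => by
      have h := hKρ.mul_mul_conjTranspose_same (permOp d n π)
      rwa [Matrix.mul_sub, Matrix.sub_mul, hcomm, Matrix.mul_assoc K, huni, Matrix.mul_one] at h
    have hKtr : K.trace.re = ∑ l, (mW l : ℝ) * mV l * top l := by
      have : K.trace = ((∑ l, (mW l : ℝ) * mV l * top l : ℝ) : ℂ) := by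
        rw [hK, blockOp_trace S _ hS₁]
        push_cast
        refine Finset.sum_congr rfl fun l _ => ?_
        simp
        ring
      rw [this, Complex.ofReal_re]
    have hle : ∑ π, ((M π * (permOp d n π * ρn * star (permOp d n π))).trace).re
        ≤ K.trace.re := by
      have hKsum : K.trace.re = ∑ π, ((M π * K).trace).re := by
        rw [← Complex.re_sum, ← Matrix.trace_sum, ← Finset.sum_mul, hsum, Matrix.one_mul]
      rw [hKsum]
      refine Finset.sum_le_sum fun π _ => ?_
      have h := trace_mul_re_nonneg (hM π) (hdom π)
      rw [Matrix.mul_sub, Matrix.trace_sub, Complex.sub_re] at h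
      linarith
    rw [← Finset.mul_sum, ← hKtr]
    exact mul_le_mul_of_nonneg_left hle (by positivity)
end

section
/- Let {H^1,…,H^m} be subgroups of a finite group G, all of the same order |H|, and let t = min_{i<j} |H|/|H^i ∩ H^j|. For the n-copy hidden subgroup state discrimination problem with states ρ_i^{⊗n} where ρ_i = (|H|/|G|)Σ_{c∈K_i}|cH^i⟩⟨cH^i| (uniform priors 1/m), the pretty good measurement succeeds with probability at least 1/(1 + m/t^n); consequently the error probability is at most 2m/t^n. -/
/-!
Write `S = ρbar^(-1/2)` (on the support), `q = (|H|/|G|)ⁿ` and `ρᵢ = ρn i`.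

In the group basis `hsState H` has entry `1/|G|` at `(x, y)` if `x⁻¹ y ∈ H` and `0` otherwise
(`hsState_apply`). Hence `ρᵢ` is Hermitian of trace one with `ρᵢ² = q ρᵢ`, i.e. `q` times a projection
of rank `1/q`, and `tr (ρᵢ ρⱼ) = (|Hᵢ ∩ Hⱼ| / |G|)ⁿ ≤ q / tⁿ` for `i ≠ j`.

The bound then follows for any such family (`pgm_core`), with `ε = 1/tⁿ`, in three steps.

* Cauchy-Schwarz on the range of `ρᵢ` gives `tr (S ρᵢ S ρᵢ) ≥ q (tr S ρᵢ)²`. It is used in the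
  linearized form `tr (S ρᵢ S ρᵢ) ≥ 2 c q tr (S ρᵢ) - c² q` for real `c` (`trace_sandwich_lower`);
  summing over `i` with `c = T := tr (S ρbar) = tr √ρbar` yields `pPGM ≥ q T² / m`.
* The purity satisfies `tr ρbar² = m⁻² ∑ᵢⱼ tr (ρᵢ ρⱼ) ≤ λ := q (1 + m ε) / m`.
* For eigenvalues `μ ≥ 0` of `ρbar`, the tangent line of `x ↦ x^(-1/2)` at `λ`, multiplied by `μ`,
  gives `√μ ≥ (3/2) λ^(-1/2) μ - (1/2) λ^(-3/2) μ²`. Summing, `T ≥ λ^(-1/2)`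
  (`trace_sqrt_lower`), so `pPGM ≥ q / (m λ) = 1 / (1 + m ε)`.
-/


open scoped ComplexOrder Pointwise

/-- Real power of a Hermitian matrix via the functional calculus (negative powers are taken
on the support). Junk value `0` for non-Hermitian matrices. -/
noncomputable def mpow {ι : Type*} [Fintype ι] [DecidableEq ι]
    (A : Matrix ι ι ℂ) (α : ℝ) : Matrix ι ι ℂ :=
  if h : A.IsHermitian then h.cfc (fun x => x ^ α) else 0

/-- The coset state vector `|cH⟩ = |H|^{-1/2} ∑_{h ∈ H} |ch⟩` in `ℂ^G`. -/
noncomputable def cosetVec {G : Type*} [Group G] [Fintype G]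
    (H : Subgroup G) (c : G) : G → ℂ :=
  Set.indicator (c • (H : Set G)) (fun _ => ((1 / Real.sqrt (Nat.card H) : ℝ) : ℂ))

/-- The hidden subgroup state `ρ_H = (|H|/|G|) ∑_{cosets cH} |cH⟩⟨cH|`
(written as `(1/|G|) ∑_{c ∈ G} |cH⟩⟨cH|`). -/
noncomputable def hsState {G : Type*} [Group G] [Fintype G] (H : Subgroup G) :
    Matrix G G ℂ :=
  (1 / (Fintype.card G : ℂ)) •
    ∑ c : G, Matrix.vecMulVec (cosetVec H c) (star (cosetVec H c))

/-- The `n`-fold tensor power of a matrix on `ℂ^G`. -/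
noncomputable def npow' {G : Type*} [Fintype G] (n : ℕ) (A : Matrix G G ℂ) :
    Matrix (Fin n → G) (Fin n → G) ℂ :=
  Matrix.of fun x y => ∏ k, A (x k) (y k)

/-- In the group basis, `ρ_H` is the normalized indicator of the relation `x⁻¹ y ∈ H`: exactly the
`|H|` elements `c ∈ x H` contribute `1/|H|` each. -/
theorem hsState_apply {G : Type*} [Group G] [Fintype G] [DecidableEq G] (H : Subgroup G) (x y : G) :
    hsState H x y = (H : Set G).indicator (fun _ => (1 / (Fintype.card G : ℂ))) (x⁻¹ * y) := by
  classical
  have hH : (Nat.card H : ℝ) ≠ 0 := by exact_mod_cast Nat.card_pos.ne'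
  have hsq : (((1 / Real.sqrt (Nat.card H) : ℝ) : ℂ)) * ((1 / Real.sqrt (Nat.card H) : ℝ) : ℂ)
      = 1 / (Nat.card H : ℂ) := by
    rw [← Complex.ofReal_mul, div_mul_div_comm, Real.mul_self_sqrt (by positivity)]
    push_cast; simp
  have h1 : ∀ c : G, cosetVec H c x * star (cosetVec H c y)
      = if c⁻¹ * x ∈ H ∧ x⁻¹ * y ∈ H then 1 / (Nat.card H : ℂ) else 0 := by
    intro c
    -- `c⁻¹ y = (c⁻¹ x) (x⁻¹ y)`, so given `x ∈ c H`, the condition `y ∈ c H` is independent of `c`.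
    have key : c⁻¹ * x ∈ H → (c⁻¹ * y ∈ H ↔ x⁻¹ * y ∈ H) := by
      intro h
      rw [← H.mul_mem_cancel_left h (y := x⁻¹ * y)]
      simp [mul_assoc]
    simp only [cosetVec, Set.indicator_apply, mem_leftCoset_iff, SetLike.mem_coe]
    by_cases hx : c⁻¹ * x ∈ H
    · rw [key hx]
      by_cases hxy : x⁻¹ * y ∈ H
      · rw [if_pos hx, if_pos hxy, if_pos ⟨hx, hxy⟩, ← hsq]
        simp
      · simp [hxy]
    · simp [hx]
  have h2 : ∑ c : G, (if c⁻¹ * x ∈ H then (1:ℂ) else 0) = Nat.card H := by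
    rw [← Equiv.sum_comp ((Equiv.inv G).trans (Equiv.mulLeft x))]
    simp only [Equiv.trans_apply, Equiv.inv_apply, Equiv.coe_mulLeft, mul_inv_rev, inv_inv,
      inv_mul_cancel_right]
    rw [Finset.sum_boole, Nat.card_eq_fintype_card, Fintype.card_subtype]
  have hH' : (Nat.card H : ℂ) ≠ 0 := by exact_mod_cast hH
  simp only [hsState, Matrix.smul_apply, Matrix.sum_apply, Matrix.vecMulVec_apply, Pi.star_apply, h1,
    smul_eq_mul, Set.indicator_apply, SetLike.mem_coe]
  by_cases hxy : x⁻¹ * y ∈ H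
  · simp only [hxy, and_true, if_true]
    have : ∀ c : G, (if c⁻¹ * x ∈ H then 1 / (Nat.card H : ℂ) else 0) =
      (if c⁻¹ * x ∈ H then (1:ℂ) else 0) * (1 / (Nat.card H : ℂ)) := by
      intro c; split_ifs <;> simp
    simp only [this]
    rw [← Finset.sum_mul, h2]
    field_simp
  · simp [hxy]

theorem hsState_isHermitian {G : Type*} [Group G] [Fintype G] [DecidableEq G] (H : Subgroup G) :
    (hsState H).IsHermitian := by
  classical
  ext x y
  rw [Matrix.conjTranspose_apply, hsState_apply, hsState_apply]
  have : y⁻¹ * x ∈ H ↔ x⁻¹ * y ∈ H := by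
    rw [← H.inv_mem_iff]; simp
  simp only [Set.indicator_apply, SetLike.mem_coe, this]
  split_ifs <;> simp

/-- `ρ_H` is `|H|/|G|` times a projection. -/
theorem hsState_mul_self {G : Type*} [Group G] [Fintype G] [DecidableEq G] (H : Subgroup G) :
    hsState H * hsState H = ((Nat.card H : ℂ) / Fintype.card G) • hsState H := by
  classical
  ext x y
  simp only [Matrix.mul_apply, Matrix.smul_apply, hsState_apply, smul_eq_mul, Set.indicator_apply,
    SetLike.mem_coe]
  have h1 : ∀ z : G, (if x⁻¹ * z ∈ H then (1 / (Fintype.card G : ℂ)) else 0) *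
      (if z⁻¹ * y ∈ H then (1 / (Fintype.card G : ℂ)) else 0) =
      (if x⁻¹ * z ∈ H then (1:ℂ) else 0) * ((1 / (Fintype.card G : ℂ)) *
        (if x⁻¹ * y ∈ H then (1 / (Fintype.card G : ℂ)) else 0)) := by
    intro z
    by_cases hz : x⁻¹ * z ∈ H
    · have : z⁻¹ * y ∈ H ↔ x⁻¹ * y ∈ H := by
        rw [← H.mul_mem_cancel_left hz (y := z⁻¹ * y)]
        simp [mul_assoc]
      simp only [hz, this, if_true, one_mul]
    · simp [hz]
  simp only [h1]
  rw [← Finset.sum_mul, ← Equiv.sum_comp (Equiv.mulLeft x)]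
  simp only [Equiv.coe_mulLeft, inv_mul_cancel_left]
  rw [Finset.sum_boole, ← Fintype.card_subtype, Nat.card_eq_fintype_card]
  ring

theorem hsState_trace {G : Type*} [Group G] [Fintype G] [DecidableEq G] (H : Subgroup G) :
    (hsState H).trace = 1 := by
  simp [Matrix.trace, hsState_apply]

/-- The overlap of two hidden subgroup states counts the pairs `(x, y)` with `x⁻¹ y ∈ H ⊓ K`. -/
theorem hsState_mul_trace {G : Type*} [Group G] [Fintype G] [DecidableEq G] (H K : Subgroup G) :
    (hsState H * hsState K).trace = (Nat.card (H ⊓ K : Subgroup G) : ℂ) / Fintype.card G := by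
  classical
  have h1 : ∀ x y : G, hsState H x y * hsState K y x =
      (if x⁻¹ * y ∈ H ⊓ K then (1:ℂ) else 0) * (1 / (Fintype.card G : ℂ)) ^ 2 := by
    intro x y
    have : y⁻¹ * x ∈ K ↔ x⁻¹ * y ∈ K := by
      rw [← K.inv_mem_iff]; simp
    simp only [hsState_apply, Set.indicator_apply, SetLike.mem_coe, this, Subgroup.mem_inf]
    by_cases hx : x⁻¹ * y ∈ H <;> by_cases hk : x⁻¹ * y ∈ K <;> simp [hx, hk]
    ring
  have h2 : ∀ x : G, ∑ y : G, (if x⁻¹ * y ∈ H ⊓ K then (1:ℂ) else 0)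
      = Nat.card (H ⊓ K : Subgroup G) := by
    intro x
    rw [← Equiv.sum_comp (Equiv.mulLeft x)]
    simp only [Equiv.coe_mulLeft, inv_mul_cancel_left]
    rw [Finset.sum_boole, ← Fintype.card_subtype, Nat.card_eq_fintype_card]
  simp only [Matrix.trace, Matrix.diag_apply, Matrix.mul_apply, h1, ← Finset.sum_mul, h2]
  simp only [Finset.sum_const, Finset.card_univ, nsmul_eq_mul]
  have : (Fintype.card G : ℂ) ≠ 0 := by exact_mod_cast Fintype.card_ne_zero
  field_simp

theorem npow'_mul {G : Type*} [Fintype G] (n : ℕ) (A B : Matrix G G ℂ) :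
    npow' n A * npow' n B = npow' n (A * B) := by
  classical
  ext x y
  simp only [npow', Matrix.mul_apply, Matrix.of_apply, Finset.prod_univ_sum, ← Finset.prod_mul_distrib,
    Fintype.piFinset_univ]

theorem npow'_trace {G : Type*} [Fintype G] (n : ℕ) (A : Matrix G G ℂ) :
    (npow' n A).trace = A.trace ^ n := by
  classical
  simp only [npow', Matrix.trace, Matrix.diag_apply, Matrix.of_apply]
  have h := Finset.prod_univ_sum (fun _ : Fin n => (Finset.univ : Finset G)) (fun _ x => A x x)
  rw [Fintype.piFinset_univ] at h
  rw [← h]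
  simp

theorem npow'_smul {G : Type*} [Fintype G] (n : ℕ) (c : ℂ) (A : Matrix G G ℂ) :
    npow' n (c • A) = c ^ n • npow' n A := by
  ext x y
  simp [npow', Finset.prod_mul_distrib]

theorem npow'_isHermitian {G : Type*} [Fintype G] (n : ℕ) {A : Matrix G G ℂ} (hA : A.IsHermitian) :
    (npow' n A).IsHermitian := by
  ext x y
  simp only [npow', Matrix.conjTranspose_apply, Matrix.of_apply, star_prod, hA.apply]

theorem mpow_isHermitian {ι : Type*} [Fintype ι] [DecidableEq ι] (A : Matrix ι ι ℂ) (α : ℝ) :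
    (mpow A α).IsHermitian := by
  unfold mpow
  split_ifs with h
  · have h2 : (Matrix.diagonal (RCLike.ofReal ∘ (fun x : ℝ => x ^ α) ∘ h.eigenvalues) :
        Matrix ι ι ℂ).IsHermitian := by
      rw [Matrix.isHermitian_diagonal_iff]
      intro i
      simp [IsSelfAdjoint]
    rw [Matrix.IsHermitian.cfc]
    exact h2.isSelfAdjoint.map _
  · exact Matrix.isHermitian_zero

theorem conj_trace {ι : Type*} [Fintype ι] [DecidableEq ι] (U : unitary (Matrix ι ι ℂ))
    (D : Matrix ι ι ℂ) : (Unitary.conjStarAlgAut ℂ _ U D).trace = D.trace := by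
  rw [Unitary.conjStarAlgAut_apply, Matrix.trace_mul_cycle]
  simp

/-- The tangent line of the convex function `x ↦ x^(-1/2)` at `s²`, multiplied by `μ`. At `μ = 0`
both sides vanish. With `r = √μ` the difference is `r (r - s)² (r + 2 s) / (2 s³)`. -/
theorem rpow_tangent {μ s : ℝ} (hμ : 0 ≤ μ) (hs : 0 < s) :
    3 / 2 / s * μ - 1 / (2 * s ^ 3) * (μ * μ) ≤ μ ^ (-(1 / 2) : ℝ) * μ := by
  have h1 : μ ^ (-(1 / 2) : ℝ) * μ = √μ := by
    rcases hμ.eq_or_lt with rfl | h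
    · simp
    · rw [Real.sqrt_eq_rpow]
      nth_rewrite 2 [← Real.rpow_one μ]
      rw [← Real.rpow_add h]; norm_num
  rw [h1]
  obtain ⟨r, hr, rfl⟩ : ∃ r : ℝ, 0 ≤ r ∧ μ = r ^ 2 := ⟨√μ, Real.sqrt_nonneg _, (Real.sq_sqrt hμ).symm⟩
  rw [Real.sqrt_sq hr]
  have h2 : r - (3 / 2 / s * r ^ 2 - 1 / (2 * s ^ 3) * (r ^ 2 * r ^ 2))
      = r * (r - s) ^ 2 * (r + 2 * s) / (2 * s ^ 3) := by
    field_simp; ring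
  have h3 : 0 ≤ r * (r - s) ^ 2 * (r + 2 * s) / (2 * s ^ 3) := by positivity
  linarith

/-- A lower bound on `tr √A` (in the form `tr (A^(-1/2) A)`) in terms of `tr A` and `tr A²`,
obtained by applying `rpow_tangent` to every eigenvalue. -/
theorem trace_sqrt_lower {ι : Type*} [Fintype ι] [DecidableEq ι] {A : Matrix ι ι ℂ}
    (hA : A.PosSemidef) {s : ℝ} (hs : 0 < s) :
    3 / 2 / s * A.trace.re - 1 / (2 * s ^ 3) * (A * A).trace.re
      ≤ (mpow A (-(1 / 2)) * A).trace.re := by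
  have h := hA.1
  set U := h.eigenvectorUnitary
  have e1 : A.trace.re = ∑ i, h.eigenvalues i := by
    rw [h.trace_eq_sum_eigenvalues]; simp
  have e2 : (A * A).trace.re = ∑ i, h.eigenvalues i * h.eigenvalues i := by
    conv_lhs => rw [h.spectral_theorem]
    rw [← map_mul, conj_trace, Matrix.diagonal_mul_diagonal, Matrix.trace_diagonal]
    simp
  have e3 : (mpow A (-(1 / 2)) * A).trace.re
      = ∑ i, h.eigenvalues i ^ (-(1 / 2) : ℝ) * h.eigenvalues i := by
    have : mpow A (-(1 / 2)) * A = Unitary.conjStarAlgAut ℂ _ h.eigenvectorUnitary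
        (Matrix.diagonal (RCLike.ofReal ∘ (fun x : ℝ => x ^ (-(1 / 2) : ℝ)) ∘ h.eigenvalues) *
          Matrix.diagonal (RCLike.ofReal ∘ h.eigenvalues)) := by
      rw [map_mul, ← h.spectral_theorem, mpow, dif_pos h, Matrix.IsHermitian.cfc]
    rw [this, conj_trace, Matrix.diagonal_mul_diagonal, Matrix.trace_diagonal, Complex.re_sum]
    refine Finset.sum_congr rfl fun i _ => ?_
    simp only [Function.comp_apply, Complex.coe_algebraMap]
    rw [← Complex.ofReal_mul, Complex.ofReal_re]
  rw [e1, e2, e3, Finset.mul_sum, Finset.mul_sum, ← Finset.sum_sub_distrib]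
  exact Finset.sum_le_sum fun i _ => rpow_tangent (hA.eigenvalues_nonneg i) hs

/-- Linearized Cauchy-Schwarz for `tr (S R S R)`, where `R` is `q` times a projection. It expands
`tr B² ≥ 0` for the Hermitian matrix `B = R S R - c q R`. -/
theorem trace_sandwich_lower {ι : Type*} [Fintype ι] {S R : Matrix ι ι ℂ}
    (hS : S.IsHermitian) (hR : R.IsHermitian) {q : ℝ} (hq : 0 < q) (hRR : R * R = (q : ℂ) • R)
    (hR1 : R.trace = 1) (c : ℝ) :
    2 * c * q * (S * R).trace.re - c ^ 2 * q ≤ (S * R * S * R).trace.re := by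
  have hB : (R * S * R - ((c * q : ℝ) : ℂ) • R).IsHermitian := by
    rw [Matrix.IsHermitian, Matrix.conjTranspose_sub, Matrix.conjTranspose_mul,
      Matrix.conjTranspose_mul, Matrix.conjTranspose_smul, hS.eq, hR.eq, Matrix.mul_assoc]
    simp
  have h0 : 0 ≤ ((R * S * R - ((c * q : ℝ) : ℂ) • R) * (R * S * R - ((c * q : ℝ) : ℂ) • R)).trace := by
    have := (Matrix.posSemidef_conjTranspose_mul_self (R * S * R - ((c * q : ℝ) : ℂ) • R)).trace_nonneg
    rwa [hB.eq] at this
  have t1 : (R * S * R * (R * S * R)).trace = (q : ℂ) ^ 2 * (S * R * S * R).trace := by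
    have : R * S * R * (R * S * R) = (q : ℂ) • (R * (S * R * S * R)) := by
      calc _ = R * S * (R * R) * S * R := by simp only [Matrix.mul_assoc]
        _ = _ := by rw [hRR]; simp [Matrix.mul_assoc]
    rw [this, Matrix.trace_smul, Matrix.trace_mul_comm, Matrix.mul_assoc _ R R, hRR]
    simp only [Matrix.mul_smul, Matrix.trace_smul, smul_eq_mul]
    ring
  have t2 : (R * S * R * R).trace = (q : ℂ) ^ 2 * (S * R).trace := by
    rw [Matrix.mul_assoc, hRR, Matrix.mul_smul, Matrix.trace_smul, Matrix.trace_mul_comm,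
      ← Matrix.mul_assoc, hRR, Matrix.smul_mul, Matrix.trace_smul, Matrix.trace_mul_comm]
    simp only [smul_eq_mul]; ring
  have t3 : (R * (R * S * R)).trace = (q : ℂ) ^ 2 * (S * R).trace := by
    rw [Matrix.trace_mul_comm, t2]
  have h1 : ((R * S * R - ((c * q : ℝ) : ℂ) • R) * (R * S * R - ((c * q : ℝ) : ℂ) • R)).trace
      = ((q ^ 2 : ℝ) : ℂ) * (S * R * S * R).trace - ((2 * (c * q) * q ^ 2 : ℝ) : ℂ) * (S * R).trace
        + (((c * q) ^ 2 * q : ℝ) : ℂ) := by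
    simp only [Matrix.sub_mul, Matrix.mul_sub, Matrix.trace_sub, Matrix.smul_mul, Matrix.mul_smul,
      Matrix.trace_smul, t1, t2, t3, hRR, hR1, smul_eq_mul]
    push_cast
    ring
  rw [h1] at h0
  have h2 := (Complex.le_def.1 h0).1
  simp only [Complex.add_re, Complex.sub_re, Complex.re_ofReal_mul, Complex.ofReal_re,
    Complex.zero_re] at h2
  have h3 : 0 ≤ q ^ 2 * ((S * R * S * R).trace.re - (2 * c * q * (S * R).trace.re - c ^ 2 * q)) := by
    linarith
  have := nonneg_of_mul_nonneg_right h3 (by positivity)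
  linarith

/-- The pretty good measurement bound for equiprobable states that are all `q` times a projection
and have pairwise overlaps at most `q ε`. -/
theorem pgm_core {ι : Type*} [Fintype ι] [DecidableEq ι] {m : ℕ} (hm : 0 < m)
    (ρ : Fin m → Matrix ι ι ℂ) {q ε : ℝ} (hq : 0 < q) (hε : 0 ≤ ε)
    (hR : ∀ i, (ρ i).IsHermitian) (hRR : ∀ i, ρ i * ρ i = (q : ℂ) • ρ i)
    (hR1 : ∀ i, (ρ i).trace = 1)
    (hov : ∀ i j, i ≠ j → (ρ i * ρ j).trace.re ≤ q * ε)
    (ρbar : Matrix ι ι ℂ) (hρbar : ρbar = (1 / (m : ℂ)) • ∑ i, ρ i) :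
    1 / (1 + m * ε) ≤ ∑ i, (1 / (m : ℝ)) * ((mpow ρbar (-(1/2)) * ((1 / (m : ℂ)) • ρ i) *
      mpow ρbar (-(1/2)) * ρ i).trace).re := by
  have hm' : (0 : ℝ) < m := by exact_mod_cast hm
  have hmc : (m : ℂ) ≠ 0 := by exact_mod_cast hm.ne'
  have hmre : (1 / (m : ℂ)) = ((1 / m : ℝ) : ℂ) := by push_cast; rfl
  set S := mpow ρbar (-(1/2)) with hSdef
  have hpsd : ρbar.PosSemidef := by
    rw [hρbar, hmre]
    refine Matrix.PosSemidef.smul (Matrix.posSemidef_sum _ fun i _ => ?_) ?_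
    · have h1 : ρ i = ((1 / q : ℝ) : ℂ) • ((ρ i).conjTranspose * ρ i) := by
        rw [(hR i).eq, hRR, smul_smul, ← Complex.ofReal_mul, one_div_mul_cancel hq.ne']
        simp
      rw [h1]
      exact (Matrix.posSemidef_conjTranspose_mul_self _).smul
        (by exact_mod_cast (by positivity : (0 : ℝ) ≤ 1 / q))
    · exact_mod_cast (by positivity : (0 : ℝ) ≤ 1 / m)
  have hSsum : ∑ i, (S * ρ i).trace.re = m * (S * ρbar).trace.re := by
    rw [hρbar, Matrix.mul_smul, Matrix.trace_smul, hmre, smul_eq_mul, Complex.re_ofReal_mul,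
      Matrix.mul_sum, Matrix.trace_sum, Complex.re_sum]
    field_simp
  have htr : ρbar.trace.re = 1 := by
    rw [hρbar, Matrix.trace_smul, Matrix.trace_sum]
    simp [hR1, hmc]
  have hdiag : ∀ i, (ρ i * ρ i).trace.re = q := by
    intro i; simp [hRR, hR1]
  have hsq : (ρbar * ρbar).trace.re ≤ q * (1 + m * ε) / m := by
    have h1 : (ρbar * ρbar).trace.re = 1 / m * (1 / m) * ∑ i, ∑ j, (ρ i * ρ j).trace.re := by
      rw [hρbar, hmre, Matrix.smul_mul, Matrix.mul_smul, Matrix.trace_smul, Matrix.trace_smul,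
        smul_eq_mul, smul_eq_mul, Complex.re_ofReal_mul, Complex.re_ofReal_mul, Matrix.sum_mul,
        Matrix.trace_sum, Complex.re_sum, mul_assoc]
      simp only [Matrix.mul_sum, Matrix.trace_sum, Complex.re_sum]
    have h2 : ∀ i, ∑ j, (ρ i * ρ j).trace.re ≤ q * (1 + m * ε) := by
      intro i
      calc ∑ j, (ρ i * ρ j).trace.re ≤ ∑ j, ((if i = j then q else 0) + q * ε) := by
            refine Finset.sum_le_sum fun j _ => ?_
            split_ifs with hij
            · subst hij; rw [hdiag]
              have : 0 ≤ q * ε := by positivity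
              linarith
            · simpa using hov i j hij
        _ = q * (1 + m * ε) := by
            rw [Finset.sum_add_distrib]; simp; ring
    have h3 : ∑ i, ∑ j, (ρ i * ρ j).trace.re ≤ m * (q * (1 + m * ε)) := by
      calc _ ≤ ∑ _i : Fin m, q * (1 + m * ε) := Finset.sum_le_sum fun i _ => h2 i
        _ = _ := by simp
    rw [h1]
    calc _ ≤ 1 / m * (1 / m) * (m * (q * (1 + m * ε))) := by gcongr
      _ = _ := by field_simp
  set lam := q * (1 + m * ε) / m with hlam
  have hlam0 : 0 < lam := by positivity
  set T := (S * ρbar).trace.re with hT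
  have hTl : 1 / √lam ≤ T := by
    have hs : 0 < √lam := Real.sqrt_pos.2 hlam0
    have h1 := trace_sqrt_lower hpsd hs
    rw [htr] at h1
    refine le_trans ?_ h1
    have h2 : 1 / (2 * √lam ^ 3) * (ρbar * ρbar).trace.re ≤ 1 / (2 * √lam ^ 3) * √lam ^ 2 := by
      rw [Real.sq_sqrt hlam0.le]; gcongr
    have h3 : 3 / 2 / √lam * 1 - 1 / (2 * √lam ^ 3) * √lam ^ 2 = 1 / √lam := by
      field_simp; norm_num
    linarith
  have hT2 : 1 / lam ≤ T ^ 2 := by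
    calc 1 / lam = (1 / √lam) ^ 2 := by rw [div_pow, Real.sq_sqrt hlam0.le, one_pow]
      _ ≤ T ^ 2 := by gcongr
  have hfin : q * T ^ 2 / m ≤ ∑ i, (1 / (m : ℝ)) *
      ((S * ((1 / (m : ℂ)) • ρ i) * S * ρ i).trace).re := by
    have h1 : ∀ i, (1 / (m : ℝ)) * (1 / m * (2 * T * q * (S * ρ i).trace.re - T ^ 2 * q)) ≤
        (1 / (m : ℝ)) * ((S * ((1 / (m : ℂ)) • ρ i) * S * ρ i).trace).re := by
      intro i
      rw [hmre, Matrix.mul_smul, Matrix.smul_mul, Matrix.smul_mul, Matrix.trace_smul, smul_eq_mul,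
        Complex.re_ofReal_mul]
      have := trace_sandwich_lower (mpow_isHermitian ρbar (-(1/2))) (hR i) hq (hRR i) (hR1 i) T
      gcongr
    refine le_trans (le_of_eq ?_) (Finset.sum_le_sum fun i _ => h1 i)
    rw [← Finset.mul_sum, ← Finset.mul_sum, Finset.sum_sub_distrib, ← Finset.mul_sum, hSsum]
    simp only [Finset.sum_const, Finset.card_univ, Fintype.card_fin, nsmul_eq_mul]
    field_simp
    ring
  refine le_trans ?_ hfin
  calc 1 / (1 + m * ε) = q * (1 / lam) / m := by rw [hlam]; field_simp
    _ ≤ _ := by gcongr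

/-- PGM bound for the hidden subgroup problem: if `H^1, …, H^m ≤ G` all have the same order
and `t = min_{i<j} |H|/|H^i ∩ H^j|`, then the pretty good measurement discriminates the
`n`-copy hidden subgroup states (uniform priors `1/m`) with success probability at least
`1/(1 + m/tⁿ)`; consequently the error probability is at most `2m/tⁿ`. -/
theorem hsp_pgm_bound
    {G : Type*} [Group G] [Fintype G] [DecidableEq G]
    (m n : ℕ) (hm : 0 < m)
    (H : Fin m → Subgroup G)
    (hcard : ∀ i j, Nat.card (H i) = Nat.card (H j))
    (t : ℝ)
    (ht : IsLeast {x : ℝ | ∃ i j : Fin m, i < j ∧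
      x = (Nat.card (H i) : ℝ) / (Nat.card (H i ⊓ H j : Subgroup G) : ℝ)} t)
    (ρn : Fin m → Matrix (Fin n → G) (Fin n → G) ℂ)
    (hρn : ∀ i, ρn i = npow' n (hsState (H i)))
    (ρbar : Matrix (Fin n → G) (Fin n → G) ℂ)
    (hρbar : ρbar = (1 / (m : ℂ)) • ∑ i, ρn i)
    (pPGM : ℝ)
    (hpPGM : pPGM = ∑ i, (1 / (m : ℝ)) *
      ((mpow ρbar (-(1/2)) * ((1 / (m : ℂ)) • ρn i) * mpow ρbar (-(1/2)) * ρn i).trace).re) :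
    1 / (1 + (m : ℝ) / t ^ n) ≤ pPGM ∧ 1 - pPGM ≤ 2 * (m : ℝ) / t ^ n := by
  have hm0 : (0 : ℝ) < m := by exact_mod_cast hm
  have hG : (0 : ℝ) < Fintype.card G := by exact_mod_cast Fintype.card_pos
  have hpos : ∀ K : Subgroup G, (0 : ℝ) < Nat.card K := fun K => by exact_mod_cast Nat.card_pos
  have ht0 : 0 < t := by
    obtain ⟨i, j, -, rfl⟩ := ht.1
    exact div_pos (hpos _) (hpos _)
  let q : ℝ := ((Nat.card (H ⟨0, hm⟩) : ℝ) / Fintype.card G) ^ n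
  have hq : 0 < q := pow_pos (div_pos (hpos _) hG) n
  have hqi : ∀ i, q = ((Nat.card (H i) : ℝ) / Fintype.card G) ^ n := fun i => by
    simp only [q, hcard ⟨0, hm⟩ i]
  -- `|H i ∩ H j| ≤ |H| / t` for distinct indices, in either order.
  have hint : ∀ i j, i ≠ j →
      (Nat.card (H i ⊓ H j : Subgroup G) : ℝ) ≤ (Nat.card (H i) : ℝ) * t⁻¹ := by
    have hlt : ∀ i j, i < j →
        (Nat.card (H i ⊓ H j : Subgroup G) : ℝ) ≤ (Nat.card (H i) : ℝ) * t⁻¹ := by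
      intro i j hij
      have h1 := ht.2 ⟨i, j, hij, rfl⟩
      rw [le_div_iff₀ (hpos _)] at h1
      rw [← div_eq_mul_inv, le_div_iff₀ ht0]
      linarith
    intro i j hij
    rcases lt_or_gt_of_ne hij with h | h
    · exact hlt i j h
    · rw [inf_comm, hcard i j]; exact hlt j i h
  have hcore : 1 / (1 + (m : ℝ) * (t⁻¹) ^ n) ≤ pPGM := by
    rw [hpPGM]
    refine pgm_core hm ρn hq (by positivity) (fun i => ?_) (fun i => ?_) (fun i => ?_)
      (fun i j hij => ?_) ρbar hρbar
    · rw [hρn]; exact npow'_isHermitian n (hsState_isHermitian _)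
    · rw [hρn, npow'_mul, hsState_mul_self, npow'_smul, hqi i]
      push_cast; rfl
    · rw [hρn, npow'_trace, hsState_trace, one_pow]
    · rw [hρn, hρn, npow'_mul, npow'_trace, hsState_mul_trace, hqi i, ← mul_pow]
      have h1 : ((Nat.card (H i ⊓ H j : Subgroup G) : ℂ) / Fintype.card G) ^ n
          = (((Nat.card (H i ⊓ H j : Subgroup G) : ℝ) / Fintype.card G) ^ n : ℝ) := by
        push_cast; rfl
      rw [h1, Complex.ofReal_re, div_mul_eq_mul_div]
      gcongr
      exact hint i j hij
  rw [inv_pow, ← div_eq_mul_inv] at hcore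
  refine ⟨hcore, ?_⟩
  have hx : 0 ≤ (m : ℝ) / t ^ n := by positivity
  -- `1 - 1 / (1 + x) = x / (1 + x) ≤ 2 x`
  have h1 : 1 - 2 * ((m : ℝ) / t ^ n) ≤ 1 / (1 + (m : ℝ) / t ^ n) := by
    rw [le_div_iff₀ (by positivity)]
    nlinarith
  rw [mul_div_assoc]
  linarith
end
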